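/- arXiv:1508.03960 — 6 statements merged into one kernel-verified Lean document; each statement's English description precedes it below -/
import Mathlib

section
/- Let ι be an arbitrary index type and let p, q : ι → ℝ³ be two families of points in Euclidean 3-space such that dist(p i, p j) = dist(q i, q j) for all i, j ∈ ι. Then there exists an isometric equivalence f : ℝ³ ≃ ℝ³ (a distance-preserving bijection of ℝ³ onto itself) with f(p i) = q i for all i ∈ ι. -/
/-- Two families of vectors with the same Gram matrix are related by a linear isometry. -/
theorem exists_linearIsometry_of_inner {ι V : Type*} [NormedAddCommGroup V]
    [InnerProductSpace ℝ V] [FiniteDimensional ℝ V] (u v : ι → V)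
    (h : ∀ i j, inner ℝ (u i) (u j) = inner ℝ (v i) (v j)) :
    ∃ f : V →ₗᵢ[ℝ] V, ∀ i, f (u i) = v i := by
  set T := Finsupp.linearCombination ℝ u with hT
  set U := Finsupp.linearCombination ℝ v with hU
  have hn : ∀ c, ‖U c‖ = ‖T c‖ := by
    intro c
    have : inner ℝ (U c) (U c) = inner ℝ (T c) (T c) := by
      simp only [hT, hU, Finsupp.linearCombination_apply, Finsupp.sum, sum_inner, inner_sum,
        real_inner_smul_left, real_inner_smul_right, h]
    rw [real_inner_self_eq_norm_sq, real_inner_self_eq_norm_sq] at this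
    exact (sq_eq_sq₀ (norm_nonneg _) (norm_nonneg _)).1 this
  obtain ⟨g, hg⟩ := T.rangeRestrict.exists_rightInverse_of_surjective T.range_rangeRestrict
  have hg' : ∀ s : LinearMap.range T, T (g s) = s := fun s =>
    congrArg Subtype.val (LinearMap.congr_fun hg s)
  let L : LinearMap.range T →ₗᵢ[ℝ] V :=
    ⟨U.comp g, fun s => by
      change ‖U (g s)‖ = ‖s‖
      rw [hn, hg']; rfl⟩
  refine ⟨L.extend, fun i => ?_⟩
  have hi : T (Finsupp.single i 1) = u i := by simp [hT]
  have hi' : U (Finsupp.single i 1) = v i := by simp [hU]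
  have hmem : u i ∈ LinearMap.range T := ⟨_, hi⟩
  have e := L.extend_apply ⟨u i, hmem⟩
  change L.extend (u i) = U (g ⟨u i, hmem⟩) at e
  rw [e, ← hi', ← sub_eq_zero, ← map_sub, ← norm_eq_zero, hn, map_sub, hg', hi, sub_self,
    norm_zero]

/-- Two families of points of Euclidean 3-space with equal corresponding pairwise
distances are congruent: there is an isometric equivalence of `ℝ³` onto itself
mapping one family onto the other. -/
theorem stmt_3 {ι : Type*} (p q : ι → EuclideanSpace ℝ (Fin 3))
    (h : ∀ i j, dist (p i) (p j) = dist (q i) (q j)) :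
    ∃ f : EuclideanSpace ℝ (Fin 3) ≃ᵢ EuclideanSpace ℝ (Fin 3),
      ∀ i, f (p i) = q i := by
  rcases isEmpty_or_nonempty ι with hι | ⟨⟨o⟩⟩
  · exact ⟨IsometryEquiv.refl _, fun i => hι.elim i⟩
  obtain ⟨f, hf⟩ := exists_linearIsometry_of_inner (fun i => p i - p o) (fun i => q i - q o) (by
    intro i j
    simp only [real_inner_eq_norm_mul_self_add_norm_mul_self_sub_norm_sub_mul_self_div_two,
      sub_sub_sub_cancel_right, ← dist_eq_norm, h])
  let F := (f.toLinearIsometryEquiv rfl).toIsometryEquiv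
  refine ⟨((IsometryEquiv.subRight (p o)).trans F).trans (IsometryEquiv.addRight (q o)),
    fun i => ?_⟩
  change f (p i - p o) + q o = q i
  rw [hf i, sub_add_cancel]
end

section
/- Let a, b, c be affinely independent points of ℝ³ with plane Π = affine span of {a, b, c}, and let a', b', c' be affinely independent points with plane Π' = affine span of {a', b', c'}. Let p, q ∈ ℝ³ lie strictly on opposite sides of Π and let p', q' lie strictly on opposite sides of Π'. Assume dist(a,b) = dist(a',b'), dist(b,c) = dist(b',c'), dist(a,c) = dist(a',c'), dist(p,a) = dist(p',a'), dist(p,b) = dist(p',b'), dist(p,c) = dist(p',c'), dist(q,a) = dist(q',a'), dist(q,b) = dist(q',b'), and dist(q,c) = dist(q',c'). Then dist(p,q) = dist(p',q'). -/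
theorem stewart_aux (a b c p : EuclideanSpace ℝ (Fin 3)) (x y z : ℝ) (h : x + y + z = 1) :
    dist p (x • a + y • b + z • c) ^ 2 =
      x * dist p a ^ 2 + y * dist p b ^ 2 + z * dist p c ^ 2
        - x * y * dist a b ^ 2 - y * z * dist b c ^ 2 - x * z * dist a c ^ 2 := by
  have e : p - (x • a + y • b + z • c) = x • (p - a) + y • (p - b) + z • (p - c) := by
    have : p = (x + y + z) • p := by rw [h, one_smul]
    nth_rewrite 1 [this]
    module
  have e1 : a - b = (p - b) - (p - a) := by abel
  have e2 : b - c = (p - c) - (p - b) := by abel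
  have e3 : a - c = (p - c) - (p - a) := by abel
  simp only [dist_eq_norm]
  rw [e, e1, e2, e3]
  generalize p - a = u
  generalize p - b = v
  generalize p - c = w
  simp only [← real_inner_self_eq_norm_sq, inner_add_left, inner_add_right, inner_sub_left,
    inner_sub_right, real_inner_smul_left, real_inner_smul_right]
  rw [real_inner_comm u v, real_inner_comm u w, real_inner_comm v w]
  obtain rfl : x = 1 - y - z := by linarith
  ring

theorem bary_aux (a b c r : EuclideanSpace ℝ (Fin 3))
    (hr : r ∈ affineSpan ℝ ({a, b, c} : Set (EuclideanSpace ℝ (Fin 3)))) :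
    ∃ x y z : ℝ, x + y + z = 1 ∧ r = x • a + y • b + z • c := by
  refine affineSpan_induction (p := fun r => ∃ x y z : ℝ, x + y + z = 1 ∧ r = x • a + y • b + z • c)
    hr ?_ ?_
  · intro s hs
    rcases hs with rfl | rfl | rfl
    · exact ⟨1, 0, 0, by norm_num, by simp⟩
    · exact ⟨0, 1, 0, by norm_num, by simp⟩
    · exact ⟨0, 0, 1, by norm_num, by simp⟩
  · intro t u v w hu hv hw
    obtain ⟨x, y, z, h, rfl⟩ := hu
    obtain ⟨x1, y1, z1, h1, rfl⟩ := hv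
    obtain ⟨x2, y2, z2, h2, rfl⟩ := hw
    refine ⟨t * (x - x1) + x2, t * (y - y1) + y2, t * (z - z1) + z2, ?_, ?_⟩
    · linear_combination t * h - t * h1 + h2
    · simp only [vsub_eq_sub, vadd_eq_add]
      module

theorem half_aux (a b c p q a' b' c' p' q' : EuclideanSpace ℝ (Fin 3))
    (hpq : (affineSpan ℝ ({a, b, c} : Set (EuclideanSpace ℝ (Fin 3)))).SOppSide p q)
    (hab : dist a b = dist a' b') (hbc : dist b c = dist b' c') (hac : dist a c = dist a' c')
    (hpa : dist p a = dist p' a') (hpb : dist p b = dist p' b') (hpc : dist p c = dist p' c')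
    (hqa : dist q a = dist q' a') (hqb : dist q b = dist q' b') (hqc : dist q c = dist q' c') :
    dist p' q' ≤ dist p q := by
  obtain ⟨r, hr, hw⟩ := AffineSubspace.wOppSide_iff_exists_wbtw.1 hpq.1
  obtain ⟨x, y, z, h, rfl⟩ := bary_aux a b c r hr
  have h1 : dist p (x • a + y • b + z • c) = dist p' (x • a' + y • b' + z • c') := by
    rw [← sq_eq_sq₀ dist_nonneg dist_nonneg, stewart_aux _ _ _ _ _ _ _ h,
      stewart_aux _ _ _ _ _ _ _ h, hab, hbc, hac, hpa, hpb, hpc]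
  have h2 : dist q (x • a + y • b + z • c) = dist q' (x • a' + y • b' + z • c') := by
    rw [← sq_eq_sq₀ dist_nonneg dist_nonneg, stewart_aux _ _ _ _ _ _ _ h,
      stewart_aux _ _ _ _ _ _ _ h, hab, hbc, hac, hqa, hqb, hqc]
  rw [← hw.dist_add_dist, dist_comm _ q, h1, h2, dist_comm q']
  exact dist_triangle _ _ _

/-- Two tetrahedra-pairs attached along congruent nondegenerate triangles, with the
apices `p, q` (resp. `p', q'`) strictly on opposite sides of the triangle's plane and
with equal corresponding edge lengths, have equal diagonals: `dist p q = dist p' q'`. -/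
theorem stmt_7 (a b c p q a' b' c' p' q' : EuclideanSpace ℝ (Fin 3))
    (habc : AffineIndependent ℝ ![a, b, c])
    (habc' : AffineIndependent ℝ ![a', b', c'])
    (hpq : (affineSpan ℝ ({a, b, c} : Set (EuclideanSpace ℝ (Fin 3)))).SOppSide p q)
    (hpq' : (affineSpan ℝ ({a', b', c'} : Set (EuclideanSpace ℝ (Fin 3)))).SOppSide p' q')
    (hab : dist a b = dist a' b') (hbc : dist b c = dist b' c') (hac : dist a c = dist a' c')
    (hpa : dist p a = dist p' a') (hpb : dist p b = dist p' b') (hpc : dist p c = dist p' c')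
    (hqa : dist q a = dist q' a') (hqb : dist q b = dist q' b') (hqc : dist q c = dist q' c') :
    dist p q = dist p' q' := by
  exact le_antisymm
    (half_aux a' b' c' p' q' a b c p q hpq' hab.symm hbc.symm hac.symm hpa.symm hpb.symm hpc.symm
      hqa.symm hqb.symm hqc.symm)
    (half_aux a b c p q a' b' c' p' q' hpq hab hbc hac hpa hpb hpc hqa hqb hqc)
end

section
/- Let a, b, c, d, p, q and a', b', c', d', p', q' be points of Euclidean 3-space ℝ³. Suppose that every pairwise distance among the five points {a, b, c, p, q} equals the distance of the corresponding pair among {a', b', c', p', q'}, that every pairwise distance among the five points {a, b, d, p, q} equals the distance of the corresponding pair among {a', b', d', p', q'}, and that the four points a, b, p, q are affinely independent. Then dist(c, d) = dist(c', d'); consequently all fifteen pairwise distances among {a, b, c, d, p, q} equal the corresponding primed distances, and the two six-point configurations are congruent. -/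
open Module in
/-- Three linearly independent vectors with prescribed Gram matrix: linear isometry. -/
lemma exists_linIso (u u' : Fin 3 → EuclideanSpace ℝ (Fin 3)) (hu : LinearIndependent ℝ u)
    (h : ∀ i j, inner ℝ (u i) (u j) = inner ℝ (u' i) (u' j)) :
    ∃ L : EuclideanSpace ℝ (Fin 3) ≃ₗᵢ[ℝ] EuclideanSpace ℝ (Fin 3), ∀ i, L (u i) = u' i := by
  let B := basisOfLinearIndependentOfCardEqFinrank hu (by simp)
  have hB : ∀ i, B i = u i := fun i => by simp [B]
  let L : EuclideanSpace ℝ (Fin 3) →ₗ[ℝ] EuclideanSpace ℝ (Fin 3) := B.constr ℝ u'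
  have hL : ∀ i, L (u i) = u' i := fun i => by rw [← hB i]; exact B.constr_basis ℝ u' i
  have hin : ∀ x y, inner ℝ (L x) (L y) = inner ℝ x y := by
    intro x y
    rw [← B.sum_repr x, ← B.sum_repr y]
    simp only [map_sum, map_smul, hB, hL, sum_inner, inner_sum, inner_smul_left,
      inner_smul_right, h]
  exact ⟨(L.isometryOfInner hin).toLinearIsometryEquiv rfl, hL⟩

open Module in
lemma eq_of_inner (u : Fin 3 → EuclideanSpace ℝ (Fin 3)) (hu : LinearIndependent ℝ u)
    (x y : EuclideanSpace ℝ (Fin 3))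
    (h : ∀ i, inner ℝ (u i) x = inner ℝ (u i) y) : x = y := by
  let B := basisOfLinearIndependentOfCardEqFinrank hu (by simp)
  have hB : ∀ i, B i = u i := fun i => by simp [B]
  exact InnerProductSpace.ext_inner_left_basis B (fun i => by rw [hB]; exact h i)

lemma inner_sub_eq (a x y : EuclideanSpace ℝ (Fin 3)) :
    inner ℝ (x - a) (y - a) = (dist x a ^ 2 + dist y a ^ 2 - dist x y ^ 2) / 2 := by
  have := norm_sub_sq_real (x - a) (y - a)
  rw [sub_sub_sub_cancel_right] at this
  rw [dist_eq_norm, dist_eq_norm, dist_eq_norm]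
  linarith


/-- If the five-point configurations `{a,b,c,p,q}` and `{a,b,d,p,q}` have the same
pairwise distances as the corresponding primed configurations, and `a, b, p, q` are
affinely independent, then `dist c d = dist c' d'`; consequently all fifteen pairwise
distances among `{a,b,c,d,p,q}` equal the corresponding primed distances and the two
six-point configurations are congruent. -/
theorem stmt_8 (a b c d p q a' b' c' d' p' q' : EuclideanSpace ℝ (Fin 3))
    (h₁ : ∀ i j : Fin 5,
      dist (![a, b, c, p, q] i) (![a, b, c, p, q] j) =
        dist (![a', b', c', p', q'] i) (![a', b', c', p', q'] j))
    (h₂ : ∀ i j : Fin 5,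
      dist (![a, b, d, p, q] i) (![a, b, d, p, q] j) =
        dist (![a', b', d', p', q'] i) (![a', b', d', p', q'] j))
    (habpq : AffineIndependent ℝ ![a, b, p, q]) :
    dist c d = dist c' d' ∧
    (∀ i j : Fin 6,
      dist (![a, b, c, d, p, q] i) (![a, b, c, d, p, q] j) =
        dist (![a', b', c', d', p', q'] i) (![a', b', c', d', p', q'] j)) ∧
    ∃ f : EuclideanSpace ℝ (Fin 3) ≃ᵢ EuclideanSpace ℝ (Fin 3),
      f a = a' ∧ f b = b' ∧ f c = c' ∧ f d = d' ∧ f p = p' ∧ f q = q' := by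
  have key : ∃ f : EuclideanSpace ℝ (Fin 3) ≃ᵢ EuclideanSpace ℝ (Fin 3),
      f a = a' ∧ f b = b' ∧ f c = c' ∧ f d = d' ∧ f p = p' ∧ f q = q' := by
    have hu : LinearIndependent ℝ ![b - a, p - a, q - a] := by
      have h := (affineIndependent_iff_linearIndependent_vsub ℝ _ (0 : Fin 4)).1 habpq
      have h' := h.comp (fun i : Fin 3 => (⟨i.succ, Fin.succ_ne_zero i⟩ : {x : Fin 4 // x ≠ 0}))
        (fun i j hij => by simpa using hij)
      have e : ![b - a, p - a, q - a] = (fun i : {x : Fin 4 // x ≠ 0} =>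
          (![a, b, p, q] i -ᵥ ![a, b, p, q] 0 : EuclideanSpace ℝ (Fin 3))) ∘
          (fun i : Fin 3 => (⟨i.succ, Fin.succ_ne_zero i⟩ : {x : Fin 4 // x ≠ 0})) := by
        ext i : 1
        fin_cases i <;> rfl
      rw [e]
      exact h'
    have ab : dist a b = dist a' b' := h₁ 0 1
    have ba : dist b a = dist b' a' := h₁ 1 0
    have pa : dist p a = dist p' a' := h₁ 3 0
    have qa : dist q a = dist q' a' := h₁ 4 0
    have bp : dist b p = dist b' p' := h₁ 1 3
    have pb : dist p b = dist p' b' := h₁ 3 1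
    have bq : dist b q = dist b' q' := h₁ 1 4
    have qb : dist q b = dist q' b' := h₁ 4 1
    have pq : dist p q = dist p' q' := h₁ 3 4
    have qp : dist q p = dist q' p' := h₁ 4 3
    have ca : dist c a = dist c' a' := h₁ 2 0
    have bc : dist b c = dist b' c' := h₁ 1 2
    have pc : dist p c = dist p' c' := h₁ 3 2
    have qc : dist q c = dist q' c' := h₁ 4 2
    have da : dist d a = dist d' a' := h₂ 2 0
    have bd : dist b d = dist b' d' := h₂ 1 2
    have pd : dist p d = dist p' d' := h₂ 3 2
    have qd : dist q d = dist q' d' := h₂ 4 2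
    obtain ⟨L, hL⟩ := exists_linIso ![b - a, p - a, q - a] ![b' - a', p' - a', q' - a'] hu (by
      intro i j
      fin_cases i <;> fin_cases j <;>
        simp [inner_sub_eq, ← dist_eq_norm, ba, pa, qa, bp, pb, bq, qb, pq, qp])
    have Lb : L (b - a) = b' - a' := hL 0
    have Lp : L (p - a) = p' - a' := hL 1
    have Lq : L (q - a) = q' - a' := hL 2
    have ext : ∀ x x' : EuclideanSpace ℝ (Fin 3), dist x a = dist x' a' → dist b x = dist b' x' →
        dist p x = dist p' x' → dist q x = dist q' x' → L (x - a) = x' - a' := by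
      intro x x' xa bx px qx
      rw [← L.apply_symm_apply (x' - a')]
      congr 1
      refine eq_of_inner _ hu _ _ fun i => ?_
      rw [← L.inner_map_map _ (L.symm _), L.apply_symm_apply, hL]
      fin_cases i <;> simp [inner_sub_eq, ba, pa, qa, xa, bx, px, qx]
    have Lc := ext c c' ca bc pc qc
    have Ld := ext d d' da bd pd qd
    refine ⟨((IsometryEquiv.subRight a).trans L.toIsometryEquiv).trans
      (IsometryEquiv.addRight a'), ?_, ?_, ?_, ?_, ?_, ?_⟩ <;>
      simp [Lb, Lc, Ld, Lp, Lq, -map_sub]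
  obtain ⟨f, fa, fb, fc, fd, fp, fq⟩ := key
  refine ⟨?_, ?_, f, fa, fb, fc, fd, fp, fq⟩
  · rw [← fc, ← fd, f.dist_eq]
  · have hf : ∀ i : Fin 6, ![a', b', c', d', p', q'] i = f (![a, b, c, d, p, q] i) := by
      intro i
      fin_cases i
      exacts [fa.symm, fb.symm, fc.symm, fd.symm, fp.symm, fq.symm]
    intro i j
    rw [hf, hf, f.dist_eq]
end

section
/- Let r, ℓ, m be reals with 0 < ℓ < 2r and 0 < m < 2r, and let O be any point of the Euclidean plane ℝ². Then there exist four points a, b, c, d with dist(O, a) = dist(O, b) = dist(O, c) = dist(O, d) = r, dist(a, b) = ℓ, dist(b, c) = m, dist(c, d) = ℓ, and dist(d, a) = m. -/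
theorem chord_aux (r l : ℝ) (h0 : 0 < l) (h1 : l < 2 * r) :
    ∃ p s : ℝ, p ^ 2 + s ^ 2 = 1 ∧ r ^ 2 * (2 - 2 * p) = l ^ 2 := by
  have hr : 0 < r := by linarith
  have hle : l ^ 2 / r ^ 2 ≤ 4 := by
    rw [div_le_iff₀ (by positivity)]
    nlinarith
  have hnn : 0 ≤ l ^ 2 / r ^ 2 := by positivity
  refine ⟨1 - l ^ 2 / r ^ 2 / 2, √(1 - (1 - l ^ 2 / r ^ 2 / 2) ^ 2), ?_, ?_⟩
  · rw [Real.sq_sqrt (by nlinarith)]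
    ring
  · field_simp
    ring

theorem dist_aux (x y : EuclideanSpace ℝ (Fin 2)) (l : ℝ) (hl : 0 < l)
    (h : (x 0 - y 0) ^ 2 + (x 1 - y 1) ^ 2 = l ^ 2) : dist x y = l := by
  rw [EuclideanSpace.dist_eq, Fin.sum_univ_two, Real.dist_eq, Real.dist_eq, sq_abs, sq_abs, h]
  exact Real.sqrt_sq hl.le

/-- For any reals `0 < ℓ < 2r`, `0 < m < 2r` and any point `O` of the Euclidean plane,
there is a quadrilateral `a b c d` inscribed in the circle of radius `r` centered at
`O` whose consecutive sides have lengths `ℓ, m, ℓ, m`. -/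
theorem stmt_11 (r ℓ m : ℝ) (hℓ₁ : 0 < ℓ) (hℓ₂ : ℓ < 2 * r)
    (hm₁ : 0 < m) (hm₂ : m < 2 * r) (O : EuclideanSpace ℝ (Fin 2)) :
    ∃ a b c d : EuclideanSpace ℝ (Fin 2),
      dist O a = r ∧ dist O b = r ∧ dist O c = r ∧ dist O d = r ∧
      dist a b = ℓ ∧ dist b c = m ∧ dist c d = ℓ ∧ dist d a = m := by
  have hr : 0 < r := by linarith
  obtain ⟨p, s, h1, h2⟩ := chord_aux r ℓ hℓ₁ hℓ₂
  obtain ⟨q, t, h3, h4⟩ := chord_aux r m hm₁ hm₂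
  refine ⟨!₂[O 0 + r * p, O 1 + r * s], !₂[O 0 + r, O 1], !₂[O 0 + r * q, O 1 + r * t],
    !₂[O 0 + r * (p * q - s * t), O 1 + r * (p * t + s * q)], ?_, ?_, ?_, ?_, ?_, ?_, ?_, ?_⟩ <;>
  apply dist_aux _ _ _ (by assumption) <;> simp
  · linear_combination r ^ 2 * h1
  · linear_combination r ^ 2 * h3
  · linear_combination r ^ 2 * (q ^ 2 + t ^ 2) * h1 + r ^ 2 * h3
  · linear_combination r ^ 2 * h1 + h2
  · linear_combination r ^ 2 * h3 + h4
  · linear_combination r ^ 2 * (q ^ 2 + t ^ 2) * h1 + (r ^ 2 + r ^ 2 * (1 - 2 * p)) * h3 + h2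
  · linear_combination r ^ 2 * (p ^ 2 + s ^ 2) * h3 + (r ^ 2 + r ^ 2 * (1 - 2 * q)) * h1 + h4
end

section
/- Let ℓ, m, s, t be reals with 0 < ℓ < 2s, 0 < m < 2s, and s < t. Then there exist ε ∈ (0, s) and continuous maps a, b, c, d, p, q from the interval (s − ε, s] to Euclidean 3-space ℝ³ such that for every r ∈ (s − ε, s]: (i) dist(p(r), x(r)) = s and dist(q(r), x(r)) = t for each x ∈ {a, b, c, d}; (ii) dist(a(r), b(r)) = ℓ, dist(b(r), c(r)) = m, dist(c(r), d(r)) = ℓ, and dist(d(r), a(r)) = m; (iii) each of the eight triples (a(r), b(r), p(r)), (b(r), c(r), p(r)), (c(r), d(r), p(r)), (d(r), a(r), p(r)), (a(r), b(r), q(r)), (b(r), c(r), q(r)), (c(r), d(r), q(r)), (d(r), a(r), q(r)) is affinely independent; and (iv) the function r ↦ dist(a(r), c(r)) is injective on (s − ε, s]. In particular, all twelve edge lengths of the configuration are constant in r while the configuration changes shape, so the Bricard octahedron of type 2 with these edge lengths is flexible. -/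
lemma tri_indep (x y z : EuclideanSpace ℝ (Fin 3)) (L s : ℝ) (h1 : 0 < L) (h2 : L < 2 * s)
    (hxy : dist x y = L) (hzx : dist z x = s) (hzy : dist z y = s) :
    AffineIndependent ℝ ![x, y, z] := by
  rw [affineIndependent_iff_not_collinear_set]
  intro h
  rcases h.wbtw_or_wbtw_or_wbtw with h | h | h
  · have := h.dist_add_dist
    rw [dist_comm y z, dist_comm x z] at this
    linarith
  · have := h.dist_add_dist
    rw [dist_comm y z, dist_comm y x] at this
    linarith
  · have := h.dist_add_dist
    linarith

lemma dist_of_sq (x y z x' y' z' D : ℝ) (hD : 0 ≤ D)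
    (h : (x - x') ^ 2 + (y - y') ^ 2 + (z - z') ^ 2 = D ^ 2) :
    dist (!₂[x, y, z] : EuclideanSpace ℝ (Fin 3)) !₂[x', y', z'] = D := by
  rw [EuclideanSpace.dist_eq, Fin.sum_univ_three]
  simp only [Real.dist_eq, sq_abs]
  simp
  rw [h, Real.sqrt_sq hD]

lemma cont_vec (f g h : ℝ → ℝ) (S : Set ℝ) (hf : ContinuousOn f S) (hg : ContinuousOn g S)
    (hh : ContinuousOn h S) :
    ContinuousOn (fun r => (!₂[f r, g r, h r] : EuclideanSpace ℝ (Fin 3))) S := by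
  apply (PiLp.continuous_toLp 2 _).comp_continuousOn
  rw [continuousOn_pi]
  intro i
  fin_cases i <;> simpa

/-- cosine of half the central angle of a chord of length `L` in a circle of radius `r`. -/
noncomputable def hc (L r : ℝ) : ℝ := √(1 - (L / (2 * r)) ^ 2)

lemma hc_cont (L s ε : ℝ) (hε : ε < s) : ContinuousOn (hc L) (Set.Ioc (s - ε) s) := by
  have : ∀ r ∈ Set.Ioc (s - ε) s, 2 * r ≠ 0 := by
    intro r hr
    have := hr.1
    intro h
    linarith
  unfold hc
  fun_prop (disch := assumption)

lemma ratio_bd {L r : ℝ} (hL : 0 < L) (h : L < 2 * r) : (L / (2 * r)) ^ 2 < 1 := by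
  have h1 : L / (2 * r) < 1 := by rw [div_lt_one (by linarith)]; exact h
  have h0 : 0 < L / (2 * r) := div_pos hL (by linarith)
  nlinarith

lemma hc_sq {L r : ℝ} (hL : 0 < L) (h : L < 2 * r) : hc L r ^ 2 = 1 - (L / (2 * r)) ^ 2 :=
  Real.sq_sqrt (by linarith [ratio_bd hL h])

lemma hc_lt {L r r' : ℝ} (hL : 0 < L) (h : L < 2 * r) (hr : r < r') : hc L r < hc L r' := by
  apply Real.sqrt_lt_sqrt (by linarith [ratio_bd hL h])
  have h0 : 0 < L / (2 * r') := div_pos hL (by linarith)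
  have : L / (2 * r') < L / (2 * r) := div_lt_div_of_pos_left hL (by linarith) (by linarith)
  nlinarith

/-- Flexibility of the Bricard octahedron of type 2: for side lengths `0 < ℓ < 2s`,
`0 < m < 2s` and `s < t`, there are `ε ∈ (0, s)` and continuous families
`a, b, c, d, p, q : (s − ε, s] → ℝ³` such that for every `r` in this interval all
twelve edge lengths of the octahedron with vertices `a r, b r, c r, d r, p r, q r`
are the prescribed constants, all eight faces are nondegenerate triangles, while the
diagonal length `dist (a r) (c r)` varies injectively with `r`. -/
theorem stmt_12 (ℓ m s t : ℝ) (hℓ₁ : 0 < ℓ) (hℓ₂ : ℓ < 2 * s)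
    (hm₁ : 0 < m) (hm₂ : m < 2 * s) (hst : s < t) :
    ∃ ε : ℝ, 0 < ε ∧ ε < s ∧
    ∃ a b c d p q : ℝ → EuclideanSpace ℝ (Fin 3),
      ContinuousOn a (Set.Ioc (s - ε) s) ∧
      ContinuousOn b (Set.Ioc (s - ε) s) ∧
      ContinuousOn c (Set.Ioc (s - ε) s) ∧
      ContinuousOn d (Set.Ioc (s - ε) s) ∧
      ContinuousOn p (Set.Ioc (s - ε) s) ∧
      ContinuousOn q (Set.Ioc (s - ε) s) ∧
      (∀ r ∈ Set.Ioc (s - ε) s,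
        dist (p r) (a r) = s ∧ dist (p r) (b r) = s ∧
        dist (p r) (c r) = s ∧ dist (p r) (d r) = s ∧
        dist (q r) (a r) = t ∧ dist (q r) (b r) = t ∧
        dist (q r) (c r) = t ∧ dist (q r) (d r) = t ∧
        dist (a r) (b r) = ℓ ∧ dist (b r) (c r) = m ∧
        dist (c r) (d r) = ℓ ∧ dist (d r) (a r) = m ∧
        AffineIndependent ℝ ![a r, b r, p r] ∧
        AffineIndependent ℝ ![b r, c r, p r] ∧
        AffineIndependent ℝ ![c r, d r, p r] ∧
        AffineIndependent ℝ ![d r, a r, p r] ∧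
        AffineIndependent ℝ ![a r, b r, q r] ∧
        AffineIndependent ℝ ![b r, c r, q r] ∧
        AffineIndependent ℝ ![c r, d r, q r] ∧
        AffineIndependent ℝ ![d r, a r, q r]) ∧
      Set.InjOn (fun r => dist (a r) (c r)) (Set.Ioc (s - ε) s) := by
  set ε := min (s - ℓ / 2) (s - m / 2) with hεdef
  have hε1 : ε ≤ s - ℓ / 2 := min_le_left _ _
  have hε2 : ε ≤ s - m / 2 := min_le_right _ _
  have hε0 : 0 < ε := lt_min (by linarith) (by linarith)
  have hεs : ε < s := by linarith
  have hA := hc_cont ℓ s ε hεs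
  have hB := hc_cont m s ε hεs
  have hne : ∀ r ∈ Set.Ioc (s - ε) s, 2 * r ≠ 0 := by
    intro r hr h
    have := hr.1
    linarith
  have hS : ContinuousOn (fun r : ℝ => ℓ / (2 * r)) (Set.Ioc (s - ε) s) := by
    fun_prop (disch := assumption)
  have hM : ContinuousOn (fun r : ℝ => m / (2 * r)) (Set.Ioc (s - ε) s) := by
    fun_prop (disch := assumption)
  have hac : ∀ r ∈ Set.Ioc (s - ε) s,
      dist (!₂[r * (hc ℓ r * hc m r - ℓ / (2 * r) * (m / (2 * r))),
          -(r * (ℓ / (2 * r) * hc m r + hc ℓ r * (m / (2 * r)))), 0] : EuclideanSpace ℝ (Fin 3))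
        !₂[r * (hc ℓ r * hc m r - ℓ / (2 * r) * (m / (2 * r))),
          r * (ℓ / (2 * r) * hc m r + hc ℓ r * (m / (2 * r))), 0] = ℓ * hc m r + m * hc ℓ r := by
    intro r hr
    have h2 := hne r hr
    have h0 : r ≠ 0 := fun h => h2 (by simp [h])
    apply dist_of_sq
    · unfold hc; positivity
    · field_simp
      ring
  refine ⟨ε, hε0, hεs,
    fun r => !₂[r * (hc ℓ r * hc m r - ℓ / (2 * r) * (m / (2 * r))),
      -(r * (ℓ / (2 * r) * hc m r + hc ℓ r * (m / (2 * r)))), 0],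
    fun r => !₂[r * (hc ℓ r * hc m r + ℓ / (2 * r) * (m / (2 * r))),
      r * (ℓ / (2 * r) * hc m r - hc ℓ r * (m / (2 * r))), 0],
    fun r => !₂[r * (hc ℓ r * hc m r - ℓ / (2 * r) * (m / (2 * r))),
      r * (ℓ / (2 * r) * hc m r + hc ℓ r * (m / (2 * r))), 0],
    fun r => !₂[r * (hc ℓ r * hc m r + ℓ / (2 * r) * (m / (2 * r))),
      -(r * (ℓ / (2 * r) * hc m r - hc ℓ r * (m / (2 * r)))), 0],
    fun r => !₂[0, 0, √(s ^ 2 - r ^ 2)],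
    fun r => !₂[0, 0, -√(t ^ 2 - r ^ 2)],
    ?_, ?_, ?_, ?_, ?_, ?_, ?_, ?_⟩
  · apply cont_vec <;> fun_prop
  · apply cont_vec <;> fun_prop
  · apply cont_vec <;> fun_prop
  · apply cont_vec <;> fun_prop
  · apply cont_vec <;> fun_prop
  · apply cont_vec <;> fun_prop
  · intro r hr
    have h2 := hne r hr
    have h0 : r ≠ 0 := fun h => h2 (by simp [h])
    have hr1 := hr.1
    have hr2 := hr.2
    have hAs := hc_sq hℓ₁ (show ℓ < 2 * r by linarith)
    have hBs := hc_sq hm₁ (show m < 2 * r by linarith)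
    have hSr : r * (ℓ / (2 * r)) = ℓ / 2 := by field_simp
    have hMr : r * (m / (2 * r)) = m / 2 := by field_simp
    have hps : √(s ^ 2 - r ^ 2) ^ 2 = s ^ 2 - r ^ 2 := Real.sq_sqrt (by nlinarith)
    have hqs : √(t ^ 2 - r ^ 2) ^ 2 = t ^ 2 - r ^ 2 := Real.sq_sqrt (by nlinarith)
    have hs0 : 0 ≤ s := by linarith
    have ht0 : 0 ≤ t := by linarith
    have htl : ℓ < 2 * t := by linarith
    have htm : m < 2 * t := by linarith
    dsimp only
    generalize hc ℓ r = A at *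
    generalize hc m r = B at *
    generalize ℓ / (2 * r) = S at *
    generalize m / (2 * r) = M at *
    generalize √(s ^ 2 - r ^ 2) = P at *
    generalize √(t ^ 2 - r ^ 2) = Q at *
    have hn : (r * (A * B - S * M)) ^ 2 + (r * (S * B + A * M)) ^ 2 = r ^ 2 := by
      linear_combination r ^ 2 * (B ^ 2 + M ^ 2) * hAs + r ^ 2 * hBs
    have hn' : (r * (A * B + S * M)) ^ 2 + (r * (S * B - A * M)) ^ 2 = r ^ 2 := by
      linear_combination r ^ 2 * (B ^ 2 + M ^ 2) * hAs + r ^ 2 * hBs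
    have hl : 4 * r ^ 2 * S ^ 2 = ℓ ^ 2 := by
      linear_combination (4 * r * S + 2 * ℓ) * hSr
    have hm : 4 * r ^ 2 * M ^ 2 = m ^ 2 := by
      linear_combination (4 * r * M + 2 * m) * hMr
    generalize ha : (!₂[r * (A * B - S * M), -(r * (S * B + A * M)), 0] :
      EuclideanSpace ℝ (Fin 3)) = a
    generalize hb : (!₂[r * (A * B + S * M), r * (S * B - A * M), 0] :
      EuclideanSpace ℝ (Fin 3)) = b
    generalize hcc : (!₂[r * (A * B - S * M), r * (S * B + A * M), 0] :
      EuclideanSpace ℝ (Fin 3)) = c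
    generalize hd : (!₂[r * (A * B + S * M), -(r * (S * B - A * M)), 0] :
      EuclideanSpace ℝ (Fin 3)) = d
    generalize hp : (!₂[0, 0, P] : EuclideanSpace ℝ (Fin 3)) = p
    generalize hq : (!₂[0, 0, -Q] : EuclideanSpace ℝ (Fin 3)) = q
    have pa : dist p a = s := by
      subst hp ha; exact dist_of_sq _ _ _ _ _ _ _ hs0 (by linear_combination hn + hps)
    have pb : dist p b = s := by
      subst hp hb; exact dist_of_sq _ _ _ _ _ _ _ hs0 (by linear_combination hn' + hps)
    have pc : dist p c = s := by
      subst hp hcc; exact dist_of_sq _ _ _ _ _ _ _ hs0 (by linear_combination hn + hps)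
    have pd : dist p d = s := by
      subst hp hd; exact dist_of_sq _ _ _ _ _ _ _ hs0 (by linear_combination hn' + hps)
    have qa : dist q a = t := by
      subst hq ha; exact dist_of_sq _ _ _ _ _ _ _ ht0 (by linear_combination hn + hqs)
    have qb : dist q b = t := by
      subst hq hb; exact dist_of_sq _ _ _ _ _ _ _ ht0 (by linear_combination hn' + hqs)
    have qc : dist q c = t := by
      subst hq hcc; exact dist_of_sq _ _ _ _ _ _ _ ht0 (by linear_combination hn + hqs)
    have qd : dist q d = t := by
      subst hq hd; exact dist_of_sq _ _ _ _ _ _ _ ht0 (by linear_combination hn' + hqs)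
    have ab : dist a b = ℓ := by
      subst ha hb; exact dist_of_sq _ _ _ _ _ _ _ hℓ₁.le
        (by linear_combination 4 * r ^ 2 * S ^ 2 * hBs + hl)
    have bc : dist b c = m := by
      subst hb hcc; exact dist_of_sq _ _ _ _ _ _ _ hm₁.le
        (by linear_combination 4 * r ^ 2 * M ^ 2 * hAs + hm)
    have cd : dist c d = ℓ := by
      subst hcc hd; exact dist_of_sq _ _ _ _ _ _ _ hℓ₁.le
        (by linear_combination 4 * r ^ 2 * S ^ 2 * hBs + hl)
    have da : dist d a = m := by
      subst hd ha; exact dist_of_sq _ _ _ _ _ _ _ hm₁.le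
        (by linear_combination 4 * r ^ 2 * M ^ 2 * hAs + hm)
    exact ⟨pa, pb, pc, pd, qa, qb, qc, qd, ab, bc, cd, da,
      tri_indep _ _ _ _ _ hℓ₁ hℓ₂ ab pa pb, tri_indep _ _ _ _ _ hm₁ hm₂ bc pb pc,
      tri_indep _ _ _ _ _ hℓ₁ hℓ₂ cd pc pd, tri_indep _ _ _ _ _ hm₁ hm₂ da pd pa,
      tri_indep _ _ _ _ _ hℓ₁ htl ab qa qb, tri_indep _ _ _ _ _ hm₁ htm bc qb qc,
      tri_indep _ _ _ _ _ hℓ₁ htl cd qc qd, tri_indep _ _ _ _ _ hm₁ htm da qd qa⟩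
  · apply StrictMonoOn.injOn
    intro r hr r' hr' hlt
    have hr1 := hr.1
    dsimp only
    rw [hac r hr, hac r' hr']
    have h1 := hc_lt hℓ₁ (show ℓ < 2 * r by linarith) hlt
    have h2 := hc_lt hm₁ (show m < 2 * r by linarith) hlt
    have := mul_lt_mul_of_pos_left h1 hm₁
    have := mul_lt_mul_of_pos_left h2 hℓ₁
    linarith
end

section
/- In the Euclidean plane ℝ², let O be a point, r > 0, and let a, b, c be pairwise distinct points with dist(O, a) = dist(O, b) = dist(O, c) = r that do not lie on a line. Let d be the reflection of b across the perpendicular bisector of a and c. Then the line through a and d is parallel to the line through b and c if and only if O lies on the closed segment from a to b or O lies on the closed segment from c to d. -/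
open scoped Affine

/-- The orthogonal reflection of the Euclidean plane across the perpendicular bisector
of two points `a` and `c`. -/
noncomputable def perpBisectorReflection (a c : EuclideanSpace ℝ (Fin 2)) :
    EuclideanSpace ℝ (Fin 2) ≃ᵃⁱ[ℝ] EuclideanSpace ℝ (Fin 2) :=
  haveI : Nonempty (AffineSubspace.perpBisector a c) :=
    (AffineSubspace.perpBisector_nonempty).to_subtype
  EuclideanGeometry.reflection (AffineSubspace.perpBisector a c)

lemma perpBisectorReflection_formula (O a b c : EuclideanSpace ℝ (Fin 2)) (t : ℝ)
    (h : dist O a = dist O c) (ht : t * inner ℝ (c - a) (c - a) = inner ℝ (b - O) (c - a)) :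
    perpBisectorReflection a c b = b - (2 * t) • (c - a) := by
  haveI : Nonempty (AffineSubspace.perpBisector a c) :=
    (AffineSubspace.perpBisector_nonempty).to_subtype
  have hO : O ∈ AffineSubspace.perpBisector a c :=
    AffineSubspace.mem_perpBisector_iff_dist_eq.2 h
  have hdir : ∀ w : EuclideanSpace ℝ (Fin 2), inner ℝ (c - a) w = 0 →
      w ∈ (AffineSubspace.perpBisector a c).direction := by
    intro w hw
    rw [AffineSubspace.direction_perpBisector, Submodule.mem_orthogonal_singleton_iff_inner_right]
    simpa using hw
  have hp : b - t • (c - a) ∈ AffineSubspace.perpBisector a c := by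
    have := AffineSubspace.vadd_mem_of_mem_direction (hdir (b - t • (c - a) - O) (by
      have e : b - t • (c - a) - O = (b - O) - t • (c - a) := by abel
      rw [e, inner_sub_right, inner_smul_right, ht, real_inner_comm, sub_self])) hO
    simpa using this
  have hv : t • (c - a) ∈ (AffineSubspace.perpBisector a c).directionᗮ := by
    rw [AffineSubspace.direction_perpBisector]
    apply Submodule.le_orthogonal_orthogonal
    exact Submodule.smul_mem _ _ (Submodule.mem_span_singleton_self _)
  have := EuclideanGeometry.reflection_orthogonal_vadd hp hv
  have e : t • (c - a) +ᵥ (b - t • (c - a)) = b := by simp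
  rw [e] at this
  unfold perpBisectorReflection
  rw [this, vadd_eq_add, mul_smul, two_smul]
  abel

lemma neg_of_mem_segment (O x y : EuclideanSpace ℝ (Fin 2)) (hxy : dist O x = dist O y)
    (hne : x ≠ y) (h : O ∈ segment ℝ x y) : y - O = -(x - O) := by
  obtain ⟨p, q, hp, hq, hpq, rfl⟩ := h
  have h1 : p • x + q • y - x = q • (y - x) := by
    rw [show p = 1 - q by linarith]; module
  have h2 : p • x + q • y - y = p • (x - y) := by
    rw [show q = 1 - p by linarith]; module
  rw [dist_eq_norm, dist_eq_norm, h1, h2, norm_smul, norm_smul, norm_sub_rev y x] at hxy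
  have hn : ‖x - y‖ ≠ 0 := by simpa [sub_eq_zero] using hne
  have := mul_right_cancel₀ hn hxy
  rw [Real.norm_of_nonneg hp, Real.norm_of_nonneg hq] at this
  obtain rfl : p = 1/2 := by linarith
  obtain rfl : q = 1/2 := by linarith
  module

/-- Let `a`, `b`, `c` be pairwise distinct, non-collinear points on the circle of
radius `r` centered at `O` in the Euclidean plane, and let `d` be the reflection of
`b` across the perpendicular bisector of `a` and `c`.  Then the line `ad` is parallel
to the line `bc` if and only if `O` lies on the segment `ab` or on the segment `cd`. -/
theorem stmt_13 (O a b c : EuclideanSpace ℝ (Fin 2)) (r : ℝ) (hr : 0 < r)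
    (hab : a ≠ b) (hbc : b ≠ c) (hac : a ≠ c)
    (hOa : dist O a = r) (hOb : dist O b = r) (hOc : dist O c = r)
    (hcol : ¬ Collinear ℝ ({a, b, c} : Set (EuclideanSpace ℝ (Fin 2))))
    (d : EuclideanSpace ℝ (Fin 2)) (hd : d = perpBisectorReflection a c b) :
    (affineSpan ℝ ({a, d} : Set (EuclideanSpace ℝ (Fin 2))) ∥
      affineSpan ℝ ({b, c} : Set (EuclideanSpace ℝ (Fin 2)))) ↔
    (O ∈ segment ℝ a b ∨ O ∈ segment ℝ c d) := by
  have hu : c - a ≠ 0 := sub_ne_zero.2 hac.symm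
  have huu : inner ℝ (c - a) (c - a) ≠ 0 := by simpa using hu
  obtain ⟨t, ht⟩ : ∃ t : ℝ, t * inner ℝ (c - a) (c - a) = inner ℝ (b - O) (c - a) :=
    ⟨_, div_mul_cancel₀ _ huu⟩
  rw [perpBisectorReflection_formula O a b c t (hOa.trans hOc.symm) ht] at hd
  have hdet : (c 0 - a 0) * (b 1 - a 1) - (c 1 - a 1) * (b 0 - a 0) ≠ 0 := by
    intro h0
    apply hcol
    rw [collinear_iff_of_mem (p₀ := a) (by simp)]
    refine ⟨c - a, ?_⟩
    have hq : (c 0 - a 0)^2 + (c 1 - a 1)^2 ≠ 0 := by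
      intro h
      apply hac
      ext i
      fin_cases i
      · simp; nlinarith [sq_nonneg (c 0 - a 0), sq_nonneg (c 1 - a 1)]
      · simp; nlinarith [sq_nonneg (c 0 - a 0), sq_nonneg (c 1 - a 1)]
    simp only [Set.mem_insert_iff, Set.mem_singleton_iff, forall_eq_or_imp, forall_eq]
    refine ⟨⟨0, by simp⟩, ⟨((b 0 - a 0) * (c 0 - a 0) + (b 1 - a 1) * (c 1 - a 1)) /
      ((c 0 - a 0)^2 + (c 1 - a 1)^2), ?_⟩, ⟨1, by simp⟩⟩
    ext i
    fin_cases i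
    · simp
      field_simp
      linear_combination -(c 1 - a 1) * h0
    · simp
      field_simp
      linear_combination (c 0 - a 0) * h0
  have key : ∀ x : EuclideanSpace ℝ (Fin 2), dist O x = r →
      (x 0 - O 0)^2 + (x 1 - O 1)^2 = r^2 := by
    intro x hx
    rw [← hx, dist_comm, EuclideanSpace.dist_eq, Real.sq_sqrt (by positivity)]
    simp [Fin.sum_univ_two, Real.dist_eq, sq_abs]
  have ka := key a hOa
  have kb := key b hOb
  have kc := key c hOc
  simp only [PiLp.inner_apply, Fin.sum_univ_two, PiLp.sub_apply, RCLike.inner_apply,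
    conj_trivial] at ht huu
  have d0 : d 0 = b 0 - 2 * t * (c 0 - a 0) := by rw [hd]; simp
  have d1 : d 1 = b 1 - 2 * t * (c 1 - a 1) := by rw [hd]; simp
  rw [AffineSubspace.affineSpan_pair_parallel_iff_vectorSpan_eq]
  have fwd : b - O = -(a - O) → d - a = b - c := by
    intro h
    have h0 : b 0 - O 0 = -(a 0 - O 0) := by simpa using congrArg (fun v => v 0) h
    have h1 : b 1 - O 1 = -(a 1 - O 1) := by simpa using congrArg (fun v => v 1) h
    have : 2 * t = 1 := by
      apply mul_right_cancel₀ huu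
      rw [h0, h1] at ht
      linear_combination 2 * ht + ka - kc
    rw [hd, this]; module
  constructor
  · intro h
    left
    have hm : d -ᵥ a ∈ vectorSpan ℝ ({b, c} : Set (EuclideanSpace ℝ (Fin 2))) := by
      rw [← h]; exact vsub_mem_vectorSpan ℝ (by simp) (by simp)
    rw [mem_vectorSpan_pair] at hm
    obtain ⟨k, hk⟩ := hm
    have k0 : k * (b 0 - c 0) = d 0 - a 0 := by simpa using congrArg (fun v => v 0) hk
    have k1 : k * (b 1 - c 1) = d 1 - a 1 := by simpa using congrArg (fun v => v 1) hk
    rw [d0] at k0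
    rw [d1] at k1
    have hk1 : k = 1 := by
      apply mul_right_cancel₀ hdet
      linear_combination (c 0 - a 0) * k1 - (c 1 - a 1) * k0
    subst hk1
    have ht1 : 2 * t = 1 := by
      apply mul_right_cancel₀ huu
      linear_combination (c 0 - a 0) * k0 + (c 1 - a 1) * k1
    have e1 : (a 0 + b 0 - 2 * O 0) * (c 0 - a 0) + (a 1 + b 1 - 2 * O 1) * (c 1 - a 1) = 0 := by
      linear_combination ((c 0 - a 0)^2 + (c 1 - a 1)^2) / 2 * ht1 - ht + kc / 2 - ka / 2
    have e2 : (a 0 + b 0 - 2 * O 0) * (b 0 - a 0) + (a 1 + b 1 - 2 * O 1) * (b 1 - a 1) = 0 := by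
      linear_combination kb - ka
    have z0 : a 0 + b 0 - 2 * O 0 = 0 := by
      apply mul_right_cancel₀ hdet
      linear_combination (b 1 - a 1) * e1 - (c 1 - a 1) * e2
    have z1 : a 1 + b 1 - 2 * O 1 = 0 := by
      apply mul_right_cancel₀ hdet
      linear_combination (c 0 - a 0) * e2 - (b 0 - a 0) * e1
    refine ⟨1/2, 1/2, by norm_num, by norm_num, by norm_num, ?_⟩
    ext i
    fin_cases i
    · simp; linarith
    · simp; linarith
  · intro h
    have hda : d - a = b - c := by
      rcases h with h | h
      · exact fwd (neg_of_mem_segment O a b (hOa.trans hOb.symm) hab h)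
      · have hdO : dist O d = dist O c := by
          rw [hOc, ← Real.sqrt_sq hr.le, dist_comm, EuclideanSpace.dist_eq]
          congr 1
          simp only [Fin.sum_univ_two, Real.dist_eq, sq_abs]
          rw [d0, d1]
          linear_combination kb + 4 * t * ht
        have hcd : c ≠ d := by
          rintro rfl
          apply hdet
          linear_combination (c 1 - a 1) * d0 - (c 0 - a 0) * d1
        have := neg_of_mem_segment O c d hdO.symm hcd h
        apply fwd
        have h0 : d 0 - O 0 = -(c 0 - O 0) := by simpa using congrArg (fun v => v 0) this
        have h1 : d 1 - O 1 = -(c 1 - O 1) := by simpa using congrArg (fun v => v 1) this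
        rw [d0] at h0
        rw [d1] at h1
        have ht1 : 2 * t = 1 := by
          apply mul_right_cancel₀ huu
          linear_combination -2 * ht - 2 * (c 0 - a 0) * h0 - 2 * (c 1 - a 1) * h1 + kc - ka
        rw [ht1] at h0 h1
        ext i
        fin_cases i
        · simp; linarith
        · simp; linarith
    rw [vectorSpan_pair_rev, vectorSpan_pair, vsub_eq_sub, vsub_eq_sub, hda]
end
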